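/- Let (Ω, 𝓕, μ) be a probability space, X, Y : Ω → ℝ and Z : Ω → ℝ^d Borel measurable, with conditional distribution functions F_{X|Z}(t|z) = (condDistrib X Z μ) z ((−∞, t]) and F_{Y|Z}(t|z) = (condDistrib Y Z μ) z ((−∞, t]). Assume that for (law of Z)-almost every z, the maps t ↦ F_{X|Z}(t|z) and t ↦ F_{Y|Z}(t|z) are continuous and strictly increasing (so that X is almost surely recovered from (U₁, Z) by the conditional quantile transform, and likewise Y from (U₂, Z)). Define U₁(ω) = F_{X|Z}(X(ω)|Z(ω)) and U₂(ω) = F_{Y|Z}(Y(ω)|Z(ω)). If the pair (U₁, U₂) is independent of Z, then X and Y are conditionally independent given Z if and only if U₁ and U₂ are independent. -/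

import Mathlib

open MeasureTheory ProbabilityTheory

/-!
The residual `U₁ = F_{X|Z}(X|Z)` is a function of `(X, Z)`, and conversely the conditional quantile
transform recovers `X` almost surely from `(U₁, Z)`: for any law `ν` on the line, the quantile
function inverts the distribution function `ν`-almost everywhere, because its flat stretches are
`ν`-null. Conditionally on `Z` every function of `Z` is a constant, so conditional independence of
`X` and `Y` given `Z` is the same as that of `U₁` and `U₂`; and since `(U₁, U₂)` is independent of
`Z`, conditioning on `Z` does not change their joint law.
-/

lemma kernel_indepFun_prodMk_left {ι Ω α β γ : Type*} {mι : MeasurableSpace ι}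
    {mΩ : MeasurableSpace Ω} {mα : MeasurableSpace α} {mβ : MeasurableSpace β}
    {mγ : MeasurableSpace γ} {κ : Kernel ι Ω} [IsZeroOrMarkovKernel κ] {ν : Measure ι}
    {W : Ω → α} {X : Ω → β} {Y : Ω → γ}
    (hW : Measurable W) (hX : Measurable X) (hY : Measurable Y)
    (hWXY : Kernel.IndepFun W (fun ω ↦ (X ω, Y ω)) κ ν) (hXY : Kernel.IndepFun X Y κ ν) :
    Kernel.IndepFun (fun ω ↦ (W ω, X ω)) Y κ ν := by
  have hWX : Kernel.IndepFun W X κ ν := hWXY.comp measurable_id measurable_fst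
  refine Kernel.IndepSets.indep (hW.prodMk hX).comap_le hY.comap_le
    (isPiSystem_prod.comap _) (@MeasurableSpace.isPiSystem_measurableSet _ (mγ.comap Y))
    (by rw [← generateFrom_prod, MeasurableSpace.comap_generateFrom]; rfl)
    (@MeasurableSpace.generateFrom_measurableSet _ (mγ.comap Y)).symm ?_
  rintro _ _ ⟨_, ⟨s, hs, t, ht, rfl⟩, rfl⟩ ⟨u, hu, rfl⟩
  filter_upwards [hWXY.measure_inter_preimage_eq_mul s (t ×ˢ u) hs (ht.prod hu),
    hXY.measure_inter_preimage_eq_mul t u ht hu,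
    hWX.measure_inter_preimage_eq_mul s t hs ht] with a hWXYa hXYa hWXa
  rw [Set.mk_preimage_prod] at hWXYa ⊢
  rw [Set.inter_assoc, hWXYa, hXYa, hWXa, mul_assoc]

section CondIndep

variable {Ω α β γ : Type*} {m mΩ : MeasurableSpace Ω} [StandardBorelSpace Ω]
  {mα : MeasurableSpace α} {mβ : MeasurableSpace β} {mγ : MeasurableSpace γ}
  {hm : m ≤ mΩ} {μ : Measure Ω} [IsFiniteMeasure μ]

lemma condIndepFun_prodMk_left_of_measurable {W : Ω → α} {X : Ω → β} {Y : Ω → γ}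
    (hW : Measurable[m] W) (hX : Measurable X) (hY : Measurable Y)
    (h : CondIndepFun m hm X Y μ) : CondIndepFun m hm (fun ω ↦ (W ω, X ω)) Y μ :=
  kernel_indepFun_prodMk_left (hW.mono hm le_rfl) hX hY
    (condIndepFun_of_measurable_left hW (hX.prodMk hY)) h

lemma condIndepFun_congr_ae_left {X X' : Ω → β} {Y : Ω → γ} (hX : X =ᵐ[μ] X')
    (h : CondIndepFun m hm X Y μ) : CondIndepFun m hm X' Y μ := by
  refine Kernel.IndepFun.congr' h (Measure.ae_ae_of_ae_comp ?_) (.of_forall fun _ ↦ .rfl)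
  rwa [condExpKernel_comp_trim]

lemma condIndepFun_left_iff_of_ae_eq {W : Ω → α} {X : Ω → β} {U : Ω → γ} {δ : Type*}
    [MeasurableSpace δ] {Y : Ω → δ} {φ : α × β → γ} {ψ : α × γ → β}
    (hW : Measurable[m] W) (hX : Measurable X) (hU : Measurable U) (hY : Measurable Y)
    (hφ : Measurable φ) (hψ : Measurable ψ)
    (hUX : (fun ω ↦ φ (W ω, X ω)) =ᵐ[μ] U) (hXU : (fun ω ↦ ψ (W ω, U ω)) =ᵐ[μ] X) :
    CondIndepFun m hm X Y μ ↔ CondIndepFun m hm U Y μ where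
  mp h := condIndepFun_congr_ae_left hUX
    ((condIndepFun_prodMk_left_of_measurable hW hX hY h).comp hφ measurable_id)
  mpr h := condIndepFun_congr_ae_left hXU
    ((condIndepFun_prodMk_left_of_measurable hW hU hY h).comp hψ measurable_id)

lemma condIndepFun_comm {X : Ω → β} {Y : Ω → γ} :
    CondIndepFun m hm X Y μ ↔ CondIndepFun m hm Y X μ :=
  ⟨.symm, .symm⟩

end CondIndep

lemma condProb_preimage_ae_eq_of_indep {Ω α : Type*} {m mΩ : MeasurableSpace Ω}
    {mα : MeasurableSpace α} {μ : Measure Ω} [IsProbabilityMeasure μ] {U : Ω → α} {s : Set α}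
    (hm : m ≤ mΩ) (hU : Measurable U) (h : Indep (mα.comap U) m μ) (hs : MeasurableSet s) :
    μ⟦U ⁻¹' s | m⟧ =ᵐ[μ] fun _ ↦ μ.real (U ⁻¹' s) := by
  have h_meas := comap_measurable U hs
  refine (condExp_indep_eq hU.comap_le hm (stronglyMeasurable_const.indicator h_meas) h).trans ?_
  simp [integral_indicator (hU hs)]

lemma condIndepFun_iff_indepFun_of_indep {Ω α β : Type*} {m mΩ : MeasurableSpace Ω}
    [StandardBorelSpace Ω] {mα : MeasurableSpace α} {mβ : MeasurableSpace β}
    {hm : m ≤ mΩ} {μ : Measure Ω} [IsProbabilityMeasure μ]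
    {U : Ω → α} {V : Ω → β} (hU : Measurable U) (hV : Measurable V)
    (h : Indep (MeasurableSpace.comap (fun ω ↦ (U ω, V ω)) inferInstance) m μ) :
    CondIndepFun m hm U V μ ↔ IndepFun U V μ := by
  have hUV : Measurable fun ω ↦ (U ω, V ω) := hU.prodMk hV
  rw [condIndepFun_iff_condExp_inter_preimage_eq_mul hU hV,
    indepFun_iff_measure_inter_preimage_eq_mul]
  refine forall₄_congr fun s t hs ht ↦ ?_
  have h_inter := condProb_preimage_ae_eq_of_indep hm hUV h (hs.prod ht)
  have h_left := condProb_preimage_ae_eq_of_indep hm hUV h (measurable_fst hs)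
  have h_right := condProb_preimage_ae_eq_of_indep hm hUV h (measurable_snd ht)
  calc μ⟦U ⁻¹' s ∩ V ⁻¹' t | m⟧ =ᵐ[μ] (fun ω ↦ (μ⟦U ⁻¹' s | m⟧) ω * (μ⟦V ⁻¹' t | m⟧) ω)
    _ ↔ ∀ᵐ _ ∂μ, μ.real (U ⁻¹' s ∩ V ⁻¹' t) = μ.real (U ⁻¹' s) * μ.real (V ⁻¹' t) := by
      refine Filter.eventually_congr ?_
      filter_upwards [h_inter, h_left, h_right] with ω h_interω h_leftω h_rightω
      exact Eq.congr h_interω (congrArg₂ (· * ·) h_leftω h_rightω)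
    _ ↔ μ (U ⁻¹' s ∩ V ⁻¹' t) = μ (U ⁻¹' s) * μ (V ⁻¹' t) := by
      rw [Filter.eventually_const, measureReal_def, measureReal_def, measureReal_def,
        ← ENNReal.toReal_mul, ENNReal.toReal_eq_toReal_iff' (measure_ne_top _ _)
          (ENNReal.mul_ne_top (measure_ne_top _ _) (measure_ne_top _ _))]

lemma ae_measure_Ioc_ne_zero {α : Type*} [LinearOrder α] [TopologicalSpace α] [OrderTopology α]
    [SecondCountableTopology α] {mα : MeasurableSpace α} (ν : Measure α) (a : α) :
    ∀ᵐ x ∂ν, a < x → ν (Set.Ioc a x) ≠ 0 := by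
  suffices ν {x | a < x ∧ ν (Set.Ioc a x) = 0} = 0 by
    simpa only [ae_iff, Classical.not_imp, not_not] using this
  refine measure_null_of_locally_null _ fun x ⟨hax, hx⟩ ↦ ?_
  by_cases h_larger : ∃ y, (a < y ∧ ν (Set.Ioc a y) = 0) ∧ x < y
  · obtain ⟨y, ⟨-, hy⟩, hxy⟩ := h_larger
    exact ⟨_, mem_nhdsWithin_of_mem_nhds (Ioc_mem_nhds hax hxy), hy⟩
  · push Not at h_larger
    exact ⟨Set.Ioc a x, Filter.mem_of_superset self_mem_nhdsWithin
      fun y hy ↦ ⟨hy.1, h_larger y hy⟩, hx⟩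

/-- The quantile function of a measure `ν` on the line, `sup {q | ν (-∞, q] < u}`. The supremum runs
over rational `q`, for joint measurability in a kernel and `u`, and in `EReal`, where it always
exists; an infinite supremum is sent to `0`. -/
noncomputable def quantile (ν : Measure ℝ) (u : ℝ) : ℝ :=
  (⨆ (q : ℚ) (_ : ν.real (Set.Iic (q : ℝ)) < u), ((q : ℝ) : EReal)).toReal

lemma measurable_quantile_kernel {α : Type*} {mα : MeasurableSpace α} (κ : Kernel α ℝ) :
    Measurable fun p : α × ℝ ↦ quantile (κ p.1) p.2 := by
  refine (Measurable.iSup fun q : ℚ ↦ ?_).ereal_toReal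
  simp only [iSup_eq_if]
  refine Measurable.ite (measurableSet_lt ?_ measurable_snd) measurable_const measurable_const
  exact (κ.measurable_coe measurableSet_Iic).ennreal_toReal.comp measurable_fst

lemma quantile_eq_of_forall_rat_lt_iff {ν : Measure ℝ} {u x : ℝ}
    (h : ∀ q : ℚ, ν.real (Set.Iic (q : ℝ)) < u ↔ q < x) : quantile ν u = x := by
  have h_sup : ⨆ (q : ℚ) (_ : ν.real (Set.Iic (q : ℝ)) < u), ((q : ℝ) : EReal) = x := by
    simp only [h]
    refine le_antisymm (iSup₂_le fun q hq ↦ EReal.coe_le_coe hq.le) (le_of_forall_lt fun c hc ↦ ?_)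
    obtain ⟨q, hcq, hqx⟩ := EReal.lt_iff_exists_rat_btwn.1 hc
    exact hcq.trans_le (le_iSup₂_of_le q (EReal.coe_lt_coe_iff.1 hqx) le_rfl)
  rw [quantile, h_sup, EReal.toReal_coe]

lemma ae_quantile_measureReal_Iic (ν : Measure ℝ) [IsFiniteMeasure ν] :
    ∀ᵐ x ∂ν, quantile ν (ν.real (Set.Iic x)) = x := by
  filter_upwards [ae_all_iff.2 fun q : ℚ ↦ ae_measure_Ioc_ne_zero ν q] with x hx
  refine quantile_eq_of_forall_rat_lt_iff fun q ↦ ⟨fun hq ↦ ?_, fun hqx ↦ ?_⟩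
  · contrapose! hq
    exact measureReal_mono (Set.Iic_subset_Iic.2 hq)
  · rw [← Set.Iic_union_Ioc_eq_Iic hqx.le, measureReal_union (Set.Iic_disjoint_Ioc le_rfl)
      measurableSet_Ioc]
    exact lt_add_of_pos_right _ (ENNReal.toReal_pos (hx q hqx) (measure_ne_top _ _))

lemma measurable_kernel_real_Iic {α β : Type*} [MeasurableSpace α] [MeasurableSpace β]
    [PartialOrder β] [TopologicalSpace β] [OrderClosedTopology β] [SecondCountableTopology β]
    [OpensMeasurableSpace β] (κ : Kernel α β) [IsSFiniteKernel κ] :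
    Measurable fun p : α × β ↦ (κ p.1).real (Set.Iic p.2) :=
  (Kernel.measurable_kernel_prodMk_left (κ := κ.comap Prod.fst measurable_fst)
    (measurableSet_le measurable_snd (measurable_snd.comp measurable_fst))).ennreal_toReal

lemma ae_compProd_quantile_real_Iic {α : Type*} {mα : MeasurableSpace α} (ν : Measure α)
    [SFinite ν] (κ : Kernel α ℝ) [IsFiniteKernel κ] :
    ∀ᵐ p ∂(ν ⊗ₘ κ), quantile (κ p.1) ((κ p.1).real (Set.Iic p.2)) = p.2 := by
  have h_meas : Measurable fun p : α × ℝ ↦ quantile (κ p.1) ((κ p.1).real (Set.Iic p.2)) :=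
    (measurable_quantile_kernel κ).comp (measurable_fst.prodMk (measurable_kernel_real_Iic κ))
  exact Measure.ae_compProd_of_ae_ae (measurableSet_eq_fun h_meas measurable_snd)
    (.of_forall fun z ↦ ae_quantile_measureReal_Iic (κ z))

section Residual

variable {Ω α : Type*} {mΩ : MeasurableSpace Ω} [mα : MeasurableSpace α]

/-- The nonparametric residual `U = F_{X|Z}(X|Z)` of `X` given `Z`: the conditional distribution
function of `X` given `Z`, evaluated at `X`. -/
noncomputable def condResidual (X : Ω → ℝ) (Z : Ω → α) (μ : Measure Ω) [IsFiniteMeasure μ]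
    (ω : Ω) : ℝ :=
  (condDistrib X Z μ (Z ω)).real (Set.Iic (X ω))

variable {μ : Measure Ω} {X : Ω → ℝ} {Z : Ω → α}

lemma measurable_condResidual [IsFiniteMeasure μ] (hX : Measurable X) (hZ : Measurable Z) :
    Measurable (condResidual X Z μ) :=
  (measurable_kernel_real_Iic (condDistrib X Z μ)).comp (hZ.prodMk hX)

lemma quantile_condResidual_ae_eq [IsFiniteMeasure μ] (hX : Measurable X) (hZ : Measurable Z) :
    (fun ω ↦ quantile (condDistrib X Z μ (Z ω)) (condResidual X Z μ ω)) =ᵐ[μ] X := by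
  have h_joint := ae_compProd_quantile_real_Iic (μ.map Z) (condDistrib X Z μ)
  rw [compProd_map_condDistrib hX.aemeasurable] at h_joint
  exact ae_of_ae_map (hZ.prodMk hX).aemeasurable h_joint

lemma condIndepFun_condResidual_left_iff [StandardBorelSpace Ω] [IsFiniteMeasure μ] {β : Type*}
    [MeasurableSpace β] {Y : Ω → β} (hX : Measurable X) (hY : Measurable Y) (hZ : Measurable Z) :
    CondIndepFun (mα.comap Z) hZ.comap_le (condResidual X Z μ) Y μ ↔
      CondIndepFun (mα.comap Z) hZ.comap_le X Y μ :=
  (condIndepFun_left_iff_of_ae_eq (comap_measurable Z) hX (measurable_condResidual hX hZ) hY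
    (measurable_kernel_real_Iic (condDistrib X Z μ)) (measurable_quantile_kernel _) .rfl
    (quantile_condResidual_ae_eq hX hZ)).symm

theorem condIndep_iff_residuals_indep_general [StandardBorelSpace Ω] [IsProbabilityMeasure μ]
    {Y : Ω → ℝ} (hX : Measurable X) (hY : Measurable Y) (hZ : Measurable Z)
    (hUZ : IndepFun (fun ω ↦ (condResidual X Z μ ω, condResidual Y Z μ ω)) Z μ) :
    CondIndepFun (mα.comap Z) hZ.comap_le X Y μ ↔
      IndepFun (condResidual X Z μ) (condResidual Y Z μ) μ := by
  have hU := measurable_condResidual (μ := μ) hX hZ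
  have hV := measurable_condResidual (μ := μ) hY hZ
  rw [← condIndepFun_condResidual_left_iff hX hY hZ, condIndepFun_comm,
    ← condIndepFun_condResidual_left_iff hY hU hZ, condIndepFun_comm]
  exact condIndepFun_iff_indepFun_of_indep hU hV hUZ

end Residual

/-- assume that for `(μ.map Z)`-a.e. `z` the conditional distribution
functions `t ↦ F_{X|Z}(t|z)` and `t ↦ F_{Y|Z}(t|z)` are continuous and strictly
increasing, and that the pair of nonparametric residuals `(U₁, U₂)` is independent of
`Z`.  Then `X` and `Y` are conditionally independent given `Z` if and only if `U₁`
and `U₂` are independent. -/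
theorem condIndep_iff_residuals_indep {Ω : Type*} [MeasurableSpace Ω]
    [StandardBorelSpace Ω] [Nonempty Ω]
    (μ : Measure Ω) [IsProbabilityMeasure μ] {d : ℕ}
    (X Y : Ω → ℝ) (Z : Ω → Fin d → ℝ)
    (hX : Measurable X) (hY : Measurable Y) (hZ : Measurable Z)
    (hFX : ∀ᵐ z ∂(μ.map Z),
      Continuous (fun t : ℝ => ((condDistrib X Z μ) z (Set.Iic t)).toReal) ∧
      StrictMono (fun t : ℝ => ((condDistrib X Z μ) z (Set.Iic t)).toReal))
    (hFY : ∀ᵐ z ∂(μ.map Z),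
      Continuous (fun t : ℝ => ((condDistrib Y Z μ) z (Set.Iic t)).toReal) ∧
      StrictMono (fun t : ℝ => ((condDistrib Y Z μ) z (Set.Iic t)).toReal))
    (hUZ : IndepFun
      (fun ω => (((condDistrib X Z μ) (Z ω) (Set.Iic (X ω))).toReal,
                 ((condDistrib Y Z μ) (Z ω) (Set.Iic (Y ω))).toReal)) Z μ) :
    CondIndepFun (MeasurableSpace.comap Z inferInstance) hZ.comap_le X Y μ ↔
      IndepFun (fun ω => ((condDistrib X Z μ) (Z ω) (Set.Iic (X ω))).toReal)
        (fun ω => ((condDistrib Y Z μ) (Z ω) (Set.Iic (Y ω))).toReal) μ := by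
  exact condIndep_iff_residuals_indep_general hX hY hZ hUZ
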